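/- For every real x and every real t, ∑_{n=0}^∞ (t^n/n!) ₕH_n(x) = e^{x t} · ₕe(t²), i.e. the exponential generating function of the harmonic Hermite polynomials is e^{xt} times the harmonic based exponential function evaluated at t². -/

import Mathlib

open Real MeasureTheory

/-- The `n`-th harmonic number `h_n = ∑_{r=1}^n 1/r`. -/
noncomputable def harm (n : ℕ) : ℝ := ∑ r ∈ Finset.range n, 1 / (r + 1 : ℝ)

/-- `h₀* = 1` and `h_r* = h_r` for `r ≥ 1`. -/
noncomputable def hstar (n : ℕ) : ℝ := if n = 0 then 1 else harm n

/-- The harmonic based exponential function `ₕe(x) = 1 + ∑_{n=1}^∞ h_n x^n / n!`. -/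
noncomputable def he (x : ℝ) : ℝ :=
  1 + ∑' n : ℕ, harm (n + 1) * x ^ (n + 1) / (Nat.factorial (n + 1) : ℝ)

/-- The `n`-th harmonic Hermite polynomial
`ₕH_n(x) = n! ∑_{r=0}^{⌊n/2⌋} h_r* x^{n-2r} / ((n-2r)! r!)`. -/
noncomputable def hH (n : ℕ) (x : ℝ) : ℝ :=
  (Nat.factorial n : ℝ) * ∑ r ∈ Finset.range (n / 2 + 1),
    hstar r * x ^ (n - 2 * r) / ((Nat.factorial (n - 2 * r) : ℝ) * (Nat.factorial r : ℝ))


lemma harm_nonneg' (n : ℕ) : 0 ≤ harm n := by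
  unfold harm
  exact Finset.sum_nonneg (fun r _ => by positivity)

lemma harm_le' (n : ℕ) : harm n ≤ n := by
  unfold harm
  calc ∑ r ∈ Finset.range n, 1 / (r + 1 : ℝ) ≤ ∑ r ∈ Finset.range n, (1 : ℝ) := by
        apply Finset.sum_le_sum
        intro r _
        rw [div_le_one (by positivity)]
        have : (0 : ℝ) ≤ r := Nat.cast_nonneg r
        linarith
    _ = n := by simp

lemma hstar_nonneg' (n : ℕ) : 0 ≤ hstar n := by
  unfold hstar
  split_ifs
  · norm_num
  · exact harm_nonneg' n

lemma hstar_le' (n : ℕ) : hstar n ≤ 2 ^ n := by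
  unfold hstar
  split_ifs with h
  · simp [h]
  · refine (harm_le' n).trans ?_
    exact_mod_cast (Nat.lt_two_pow_self (n := n)).le

lemma summable_hstar (y : ℝ) :
    Summable fun n : ℕ => ‖hstar n * y ^ n / (Nat.factorial n : ℝ)‖ := by
  refine Summable.of_nonneg_of_le (fun _ => norm_nonneg _) (fun n => ?_)
    (Real.summable_pow_div_factorial (2 * |y|))
  rw [norm_div, norm_mul, norm_pow, Real.norm_eq_abs, Real.norm_eq_abs, Real.norm_eq_abs,
    abs_of_nonneg (hstar_nonneg' n), Nat.abs_cast, mul_pow]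
  have := hstar_le' n
  gcongr

lemma he_eq (y : ℝ) : he y = ∑' n : ℕ, hstar n * y ^ n / (Nat.factorial n : ℝ) := by
  rw [(summable_hstar y).of_norm.tsum_eq_zero_add]
  simp [he, hstar]

/-- `∑_{n=0}^∞ (t^n/n!) ₕH_n(x) = e^{xt} ₕe(t²)`. -/
theorem hH_generating_function (x t : ℝ) :
    (∑' n : ℕ, t ^ n / (Nat.factorial n : ℝ) * hH n x) =
      Real.exp (x * t) * he (t ^ 2) := by
  have hinj : Function.Injective (fun n : ℕ => 2 * n) := fun a b h => by
    simpa using h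
  set g : ℕ → ℝ := fun n => hstar n * (t ^ 2) ^ n / (Nat.factorial n : ℝ) with hg
  set G : ℕ → ℝ := Function.extend (fun n : ℕ => 2 * n) g 0 with hG
  set F : ℕ → ℝ := fun n => (x * t) ^ n / (Nat.factorial n : ℝ) with hF
  have hGe : ∀ n, G (2 * n) = g n := fun n => hinj.extend_apply g 0 n
  have hGs : HasSum G (he (t ^ 2)) := by
    rw [he_eq]
    exact (hasSum_extend_zero hinj).2 (summable_hstar (t ^ 2)).of_norm.hasSum
  have hGn : Summable fun n => ‖G n‖ := hGs.summable.norm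
  have hFn : Summable fun n => ‖F n‖ := (Real.summable_pow_div_factorial (x * t)).norm
  have hFe : Real.exp (x * t) = ∑' n, F n := by
    rw [Real.exp_eq_exp_ℝ, NormedSpace.exp_eq_tsum_div]
  rw [hFe, ← hGs.tsum_eq, mul_comm,
    tsum_mul_tsum_eq_tsum_sum_range_of_summable_norm hGn hFn]
  congr 1
  ext n
  have h1 : ∑ k ∈ Finset.range (n + 1), G k * F (n - k)
      = ∑ r ∈ Finset.range (n / 2 + 1), G (2 * r) * F (n - 2 * r) := by
    symm
    rw [← Finset.sum_image (f := fun k => G k * F (n - k)) (g := fun r : ℕ => 2 * r)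
      (fun a _ b _ h => hinj h)]
    apply Finset.sum_subset
    · intro k hk
      simp only [Finset.mem_image, Finset.mem_range] at hk ⊢
      omega
    · intro k hk hk'
      simp only [Finset.mem_image, Finset.mem_range, not_exists, not_and] at hk hk'
      have : G k = 0 := by
        rw [hG, Function.extend_apply']
        · rfl
        · rintro ⟨a, ha⟩
          exact hk' a (by omega) ha
      rw [this, zero_mul]
  rw [h1, hH, ← mul_assoc, div_mul_cancel₀ _ (by positivity), Finset.mul_sum]
  apply Finset.sum_congr rfl
  intro r hr
  have hr' : 2 * r ≤ n := by
    simp only [Finset.mem_range] at hr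
    omega
  rw [hGe]
  obtain ⟨m, rfl⟩ := Nat.exists_eq_add_of_le hr'
  simp only [hg, hF, Nat.add_sub_cancel_left, pow_add, pow_mul, mul_pow]
  field_simp
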